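/- arXiv:2502.03604 — 4 statements merged into one kernel-verified Lean document; each statement's English description precedes it below -/
import Mathlib

section
/- Let f : ℝ^d → ℝ be ℓ-Lipschitz smooth and let α > 0. Then the smoothed function f_α is differentiable, and the two-point zeroth-order estimator is an unbiased estimator of its gradient: for every x ∈ ℝ^d, E_u[((f(x + αu) − f(x − αu))/(2α))·u] = ∇f_α(x), where u is uniformly distributed on the Euclidean sphere of radius √d centered at the origin in ℝ^d. -/
open MeasureTheory Metric

/-- The uniform probability measure on the closed Euclidean ball of radius `√d`
centered at the origin in `ℝ^d`. -/
noncomputable def uniformBall (d : ℕ) : Measure (EuclideanSpace ℝ (Fin d)) :=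
  (volume (closedBall (0 : EuclideanSpace ℝ (Fin d)) (Real.sqrt d)))⁻¹ •
    volume.restrict (closedBall (0 : EuclideanSpace ℝ (Fin d)) (Real.sqrt d))

/-- The uniform probability measure on the Euclidean sphere of radius `√d` centered at the
origin in `ℝ^d`, realized as the pushforward of the uniform measure on the ball of radius
`√d` under the radial projection onto that sphere. -/
noncomputable def uniformSphere (d : ℕ) : Measure (EuclideanSpace ℝ (Fin d)) :=
  (uniformBall d).map (fun x => (Real.sqrt d / ‖x‖) • x)

/-!
The translated ball `B(y, R)`, `‖y‖ < R`, is star-shaped about the origin, with radial function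
`ρ(y, u) = ⟪y, u⟫ + √(⟪y, u⟫² + R² - ‖y‖²)` in the unit direction `u`. In polar coordinates
`∫_{B(y, R)} f = ∫_S ∫_0^{ρ(y, u)} r ^ (n - 1) f(r u) dr dσ(u)`, and differentiating under the
integral sign at `y = 0`, where `ρ = R` and `∇_y ρ = u`, gives `R ^ (n - 1) ∫_S f(R u) u dσ(u)`.
The derivative falls on `ρ` and never on `f`. After normalization the gradient of the ball average
is `n / R²` times the mean of `f(R u) (R u)` over the sphere, and the factor is `1` exactly for
`R = √n`. The one-point formula becomes the two-point one because the uniform measure on the sphere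
is invariant under `u ↦ -u`.
-/

section Polar

open Set Module

theorem integral_volumeIoiPow {G : Type*} [NormedAddCommGroup G] [NormedSpace ℝ G] (n : ℕ)
    (h : ℝ → G) :
    ∫ r : Ioi (0 : ℝ), h r ∂Measure.volumeIoiPow n = ∫ r in Ioi (0 : ℝ), r ^ n • h r := by
  simp only [Measure.volumeIoiPow, ENNReal.ofReal]
  rw [integral_withDensity_eq_integral_smul (by fun_prop),
    integral_subtype_comap measurableSet_Ioi fun r ↦ Real.toNNReal (r ^ n) • h r]
  refine setIntegral_congr_fun measurableSet_Ioi fun r hr ↦ ?_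
  simp only [NNReal.smul_def, Real.coe_toNNReal _ (pow_nonneg (mem_Ioi.1 hr).le n)]

variable {E G : Type*} [NormedAddCommGroup E] [NormedSpace ℝ E] [FiniteDimensional ℝ E]
  [MeasurableSpace E] [BorelSpace E]

theorem measurable_smul_div_norm (R : ℝ) : Measurable fun v : E ↦ (R / ‖v‖) • v := by
  fun_prop

variable [NormedAddCommGroup G] (μ : Measure E) [μ.IsAddHaarMeasure]

theorem integrableOn_comp_smul_div_norm {q : E → G} (hq : Continuous q) (R : ℝ) :
    IntegrableOn (fun v ↦ q ((R / ‖v‖) • v)) (closedBall (0 : E) R) μ := by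
  obtain ⟨C, hC⟩ := (isCompact_closedBall (0 : E) |R|).exists_bound_of_continuousOn hq.continuousOn
  refine .of_bound measure_closedBall_lt_top
    (hq.comp_aestronglyMeasurable (measurable_smul_div_norm R).aestronglyMeasurable) C
    (.of_forall fun v ↦ hC _ ?_)
  rw [mem_closedBall_zero_iff, norm_smul, norm_div, norm_norm, Real.norm_eq_abs]
  rcases eq_or_ne ‖v‖ 0 with hv | hv
  · simp [hv]
  · exact (div_mul_cancel₀ _ hv).le

variable [NormedSpace ℝ G] [Nontrivial E]

theorem integral_eq_integral_toSphere_integral_Ioi {f : E → G} (hf : Integrable f μ) :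
    ∫ v, f v ∂μ =
      ∫ u, (∫ r in Ioi (0 : ℝ), r ^ (finrank ℝ E - 1) • f (r • (u : E))) ∂μ.toSphere := by
  have hpolar := μ.measurePreserving_homeomorphUnitSphereProd
  have hemb := (homeomorphUnitSphereProd E).measurableEmbedding
  let F : sphere (0 : E) 1 × Ioi (0 : ℝ) → G := fun p ↦ f ((p.2 : ℝ) • (p.1 : E))
  have hF : F ∘ homeomorphUnitSphereProd E = f ∘ Subtype.val := by
    ext v
    simp [F, smul_inv_smul₀ (norm_ne_zero_iff.2 v.2)]
  have hF_int : Integrable F (μ.toSphere.prod (.volumeIoiPow (finrank ℝ E - 1))) := by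
    rw [← hpolar.integrable_comp_emb hemb, hF,
      ← integrableOn_iff_comap_subtypeVal (measurableSet_singleton _).compl]
    exact hf.integrableOn
  calc ∫ v, f v ∂μ
      = ∫ v : ({0}ᶜ : Set E), f v ∂μ.comap (↑) := by
        rw [integral_subtype_comap (measurableSet_singleton _).compl f, restrict_compl_singleton]
    _ = ∫ v, F (homeomorphUnitSphereProd E v) ∂μ.comap (↑) :=
        integral_congr_ae (.of_forall fun v ↦ (congrFun hF v).symm)
    _ = ∫ u, ∫ r, F (u, r) ∂.volumeIoiPow (finrank ℝ E - 1) ∂μ.toSphere := by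
        rw [← integral_prod F hF_int]
        exact hpolar.integral_comp hemb F
    _ = _ := integral_congr_ae <| .of_forall fun u ↦
        integral_volumeIoiPow _ fun r ↦ f (r • (u : E))

theorem setIntegral_eq_integral_toSphere_intervalIntegral {s : Set E} (hs : MeasurableSet s)
    {ρ : sphere (0 : E) 1 → ℝ} (hρ : ∀ u, 0 ≤ ρ u)
    (hsρ : ∀ u : sphere (0 : E) 1, ∀ r : ℝ, 0 < r → (r • (u : E) ∈ s ↔ r ≤ ρ u))
    {f : E → G} (hf : IntegrableOn f s μ) :
    ∫ v in s, f v ∂μ =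
      ∫ u, (∫ r in (0 : ℝ)..ρ u, r ^ (finrank ℝ E - 1) • f (r • (u : E))) ∂μ.toSphere := by
  rw [← integral_indicator hs,
    integral_eq_integral_toSphere_integral_Ioi μ (hf.integrable_indicator hs)]
  congr 1 with u
  rw [intervalIntegral.integral_of_le (hρ u), ← Ioi_inter_Iic,
    ← setIntegral_indicator measurableSet_Iic]
  refine setIntegral_congr_fun measurableSet_Ioi fun r hr ↦ ?_
  by_cases hru : r ≤ ρ u
  · simp [hru, (hsρ u r hr).2 hru]
  · simp [hru, mt (hsρ u r hr).1 hru]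

theorem setIntegral_closedBall_comp_smul_div_norm [CompleteSpace G] {R : ℝ} (hR : 0 ≤ R)
    {q : E → G} (hq : Continuous q) :
    ∫ v in closedBall (0 : E) R, q ((R / ‖v‖) • v) ∂μ =
      (R ^ finrank ℝ E / finrank ℝ E) • ∫ u, q (R • (u : E)) ∂μ.toSphere := by
  rw [setIntegral_eq_integral_toSphere_intervalIntegral μ (ρ := fun _ ↦ R) measurableSet_closedBall
    (fun _ ↦ hR) _ (integrableOn_comp_smul_div_norm μ hq R), ← integral_smul]
  · congr 1 with u
    have hproj : ∀ r ∈ uIoc 0 R, (R / ‖r • (u : E)‖) • r • (u : E) = R • (u : E) := fun r hr ↦ by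
      rw [uIoc_of_le hR] at hr
      rw [norm_smul, norm_eq_of_mem_sphere, mul_one, Real.norm_of_nonneg hr.1.le, smul_smul,
        div_mul_cancel₀ _ hr.1.ne']
    rw [intervalIntegral.integral_congr_ae (.of_forall fun r hr ↦ by rw [hproj r hr]),
      intervalIntegral.integral_smul_const]
    obtain ⟨n, hn⟩ := Nat.exists_eq_add_one.2 (finrank_pos (R := ℝ) (M := E))
    simp [hn, integral_pow]
  · intro u r hr
    simp [norm_smul, abs_of_pos hr]

end Polar

section ParametricIntegral

open Set

variable {K : Type*} [TopologicalSpace K] [CompactSpace K] [SecondCountableTopology K]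
  [MeasurableSpace K] [OpensMeasurableSpace K] {ν : Measure K} [IsFiniteMeasure ν]

theorem hasFDerivAt_integral_of_continuousOn_fderiv {H G : Type*} [NormedAddCommGroup H]
    [NormedSpace ℝ H] [LocallyCompactSpace H] [NormedAddCommGroup G] [NormedSpace ℝ G] {U : Set H}
    (hU : IsOpen U) {F : H → K → G} {F' : H → K → H →L[ℝ] G} (hF : ∀ y ∈ U, Continuous (F y))
    (hF' : ContinuousOn (Function.uncurry F') (U ×ˢ univ))
    (hderiv : ∀ y ∈ U, ∀ k, HasFDerivAt (F · k) (F' y k) y) {x : H} (hx : x ∈ U) :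
    HasFDerivAt (fun y ↦ ∫ k, F y k ∂ν) (∫ k, F' x k ∂ν) x := by
  obtain ⟨V, hV, hVU, hVc⟩ := local_compact_nhds (hU.mem_nhds hx)
  obtain ⟨M, hM⟩ := (hVc.prod isCompact_univ).exists_bound_of_continuousOn
    (hF'.mono (prod_mono_left hVU))
  have hF'x : Continuous (F' x) := continuousOn_univ.1 (hF'.uncurry_left x hx)
  refine hasFDerivAt_integral_of_dominated_of_fderiv_le (bound := fun _ ↦ M) hV ?_ ?_
    hF'x.aestronglyMeasurable ?_ (integrable_const M) ?_
  · filter_upwards [hU.mem_nhds hx] with y hy using (hF y hy).aestronglyMeasurable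
  · exact (hF x hx).integrable_of_hasCompactSupport (.of_compactSpace _)
  · exact .of_forall fun k y hy ↦ hM (y, k) ⟨hy, mem_univ k⟩
  · exact .of_forall fun k y hy ↦ hderiv y (hVU hy) k

theorem hasGradientAt_integral_of_continuousOn_gradient {H : Type*} [NormedAddCommGroup H]
    [InnerProductSpace ℝ H] [FiniteDimensional ℝ H] {U : Set H} (hU : IsOpen U) {F : H → K → ℝ}
    {F' : H → K → H} (hF : ∀ y ∈ U, Continuous (F y))
    (hF' : ContinuousOn (Function.uncurry F') (U ×ˢ univ))
    (hderiv : ∀ y ∈ U, ∀ k, HasGradientAt (F · k) (F' y k) y) {x : H} (hx : x ∈ U) :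
    HasGradientAt (fun y ↦ ∫ k, F y k ∂ν) (∫ k, F' x k ∂ν) x := by
  have hF'x : Continuous (F' x) := continuousOn_univ.1 (hF'.uncurry_left x hx)
  have hint : Integrable (F' x) ν := hF'x.integrable_of_hasCompactSupport (.of_compactSpace _)
  rw [hasGradientAt_iff_hasFDerivAt]
  refine (hasFDerivAt_integral_of_continuousOn_fderiv
    (F' := fun y k ↦ InnerProductSpace.toDual ℝ H (F' y k)) hU hF
    ((InnerProductSpace.toDual ℝ H).continuous.comp_continuousOn hF') hderiv hx).congr_fderiv ?_
  exact (innerSL ℝ).integral_comp_comm hint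

end ParametricIntegral

section ExitRadius

variable {E : Type*} [NormedAddCommGroup E] [InnerProductSpace ℝ E]

/-- For a unit vector `u`, half the length of the chord that the line `ℝ u` cuts out of the ball of
radius `R` around `y`. -/
noncomputable def halfChord (R : ℝ) (y u : E) : ℝ := √(inner ℝ y u ^ 2 + (R ^ 2 - ‖y‖ ^ 2))

/-- For a unit vector `u`, the radial function about the origin of the ball of radius `R` around
`y`: the ray from `0` in direction `u` leaves the ball at `exitRadius R y u • u`. -/
noncomputable def exitRadius (R : ℝ) (y u : E) : ℝ := inner ℝ y u + halfChord R y u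

@[fun_prop]
theorem continuous_halfChord {X : Type*} [TopologicalSpace X] (R : ℝ) {y u : X → E}
    (hy : Continuous y) (hu : Continuous u) : Continuous fun p ↦ halfChord R (y p) (u p) := by
  unfold halfChord
  fun_prop

@[fun_prop]
theorem continuous_exitRadius {X : Type*} [TopologicalSpace X] (R : ℝ) {y u : X → E}
    (hy : Continuous y) (hu : Continuous u) : Continuous fun p ↦ exitRadius R (y p) (u p) := by
  unfold exitRadius
  fun_prop

theorem halfChord_zero_left {R : ℝ} (hR : 0 ≤ R) (u : E) : halfChord R 0 u = R := by
  simp [halfChord, Real.sqrt_sq hR]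

theorem exitRadius_zero_left {R : ℝ} (hR : 0 ≤ R) (u : E) : exitRadius R 0 u = R := by
  simp [exitRadius, halfChord_zero_left hR]

variable {R : ℝ} {y : E}

theorem halfChord_radicand_pos (hy : ‖y‖ < R) (u : E) :
    0 < inner ℝ y u ^ 2 + (R ^ 2 - ‖y‖ ^ 2) :=
  add_pos_of_nonneg_of_pos (sq_nonneg _) (sub_pos.2 (by gcongr))

theorem halfChord_pos (hy : ‖y‖ < R) (u : E) : 0 < halfChord R y u :=
  Real.sqrt_pos.2 (halfChord_radicand_pos hy u)

theorem abs_inner_le_halfChord (hy : ‖y‖ ≤ R) (u : E) : |inner ℝ y u| ≤ halfChord R y u :=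
  Real.abs_le_sqrt (le_add_of_nonneg_right (sub_nonneg.2 (by gcongr)))

theorem exitRadius_nonneg (hy : ‖y‖ ≤ R) (u : E) : 0 ≤ exitRadius R y u := by
  rw [exitRadius]
  linarith [neg_le_of_abs_le (abs_inner_le_halfChord hy u)]

theorem smul_mem_closedBall_iff_le_exitRadius (hy : ‖y‖ ≤ R) {u : E} (hu : ‖u‖ = 1) {r : ℝ}
    (hr : 0 ≤ r) : r • u ∈ closedBall y R ↔ r ≤ exitRadius R y u := by
  have hsq : ‖r • u - y‖ ^ 2 = (r - inner ℝ y u) ^ 2 - inner ℝ y u ^ 2 + ‖y‖ ^ 2 := by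
    rw [norm_sub_sq_real, norm_smul, hu, real_inner_smul_left, real_inner_comm, Real.norm_eq_abs,
      mul_one, sq_abs]
    ring
  have hradicand : 0 ≤ inner ℝ y u ^ 2 + (R ^ 2 - ‖y‖ ^ 2) :=
    add_nonneg (sq_nonneg _) (sub_nonneg.2 (by gcongr))
  have hlower : -halfChord R y u ≤ r - inner ℝ y u := by
    linarith [le_of_abs_le (abs_inner_le_halfChord hy u)]
  calc r • u ∈ closedBall y R
      ↔ ‖r • u - y‖ ^ 2 ≤ R ^ 2 := by
        rw [mem_closedBall, dist_eq_norm, sq_le_sq₀ (norm_nonneg _) ((norm_nonneg y).trans hy)]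
    _ ↔ (r - inner ℝ y u) ^ 2 ≤ inner ℝ y u ^ 2 + (R ^ 2 - ‖y‖ ^ 2) := by
        rw [hsq, ← sub_nonneg, ← sub_nonneg (b := (r - _) ^ 2)]
        ring_nf
    _ ↔ -halfChord R y u ≤ r - inner ℝ y u ∧ r - inner ℝ y u ≤ halfChord R y u :=
        Real.sq_le hradicand
    _ ↔ r ≤ exitRadius R y u := by
        rw [and_iff_right hlower, sub_le_iff_le_add', exitRadius]

theorem hasGradientAt_exitRadius [CompleteSpace E] (hy : ‖y‖ < R) (u : E) :
    HasGradientAt (exitRadius R · u) ((halfChord R y u)⁻¹ • (exitRadius R y u • u - y)) y := by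
  have hinner : HasFDerivAt (fun z : E ↦ inner ℝ z u) (innerSL ℝ u) y :=
    (innerSL ℝ u).hasFDerivAt.congr_of_eventuallyEq (.of_forall fun z ↦ real_inner_comm _ z)
  have hchord : HasFDerivAt (halfChord R · u) _ y :=
    ((hinner.pow 2).add ((hasFDerivAt_id y).norm_sq.const_sub (R ^ 2))).sqrt
      (halfChord_radicand_pos hy u).ne'
  refine (hinner.add hchord).congr_fderiv (ContinuousLinearMap.ext fun e ↦ ?_)
  have hpos := (halfChord_pos hy u).ne'
  calc _ = inner ℝ u e +
        1 / (2 * halfChord R y u) * (2 * inner ℝ y u * inner ℝ u e - 2 * inner ℝ y e) := by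
        simp [halfChord, sub_eq_add_neg, mul_add]
    _ = inner ℝ ((halfChord R y u)⁻¹ • (exitRadius R y u • u - y)) e := by
        simp only [real_inner_smul_left, inner_sub_left, exitRadius]
        field_simp
        ring

theorem hasGradientAt_intervalIntegral_exitRadius [CompleteSpace E] (hy : ‖y‖ < R) (u : E)
    {h : ℝ → ℝ} (hh : Continuous h) :
    HasGradientAt (fun z ↦ ∫ r in (0 : ℝ)..exitRadius R z u, h r)
      (h (exitRadius R y u) • (halfChord R y u)⁻¹ • (exitRadius R y u • u - y)) y := by
  rw [hasGradientAt_iff_hasFDerivAt, map_smul]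
  exact (hh.integral_hasStrictDerivAt 0 _).hasDerivAt.comp_hasFDerivAt y
    (hasGradientAt_exitRadius hy u)

end ExitRadius

section Gradient

variable {E : Type*} [NormedAddCommGroup E] [InnerProductSpace ℝ E] [CompleteSpace E] {F : E → ℝ}
  {F' x : E}

theorem hasGradientAt_const_smul (hF : HasGradientAt F F' x) (c : ℝ) :
    HasGradientAt (fun y ↦ c • F y) (c • F') x := by
  rw [hasGradientAt_iff_hasFDerivAt] at hF ⊢
  rw [map_smul]
  exact hF.const_smul c

theorem hasGradientAt_comp_smul {c : ℝ} (hF : HasGradientAt F F' (c • x)) :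
    HasGradientAt (fun y ↦ F (c • y)) (c • F') x := by
  rw [hasGradientAt_iff_hasFDerivAt] at hF ⊢
  refine (hF.comp x ((hasFDerivAt_id x).const_smul c)).congr_fderiv ?_
  ext e
  simp

end Gradient

section BallAverage

open Set Module Filter

open scoped Topology

variable {E : Type*} [NormedAddCommGroup E] [InnerProductSpace ℝ E] [FiniteDimensional ℝ E]
  [Nontrivial E] [MeasurableSpace E] [BorelSpace E] (μ : Measure E) [μ.IsAddHaarMeasure] {R : ℝ}

theorem setIntegral_closedBall_eq_integral_toSphere {G : Type*} [NormedAddCommGroup G]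
    [NormedSpace ℝ G] {y : E} (hy : ‖y‖ ≤ R) {f : E → G} (hf : Continuous f) :
    ∫ v in closedBall y R, f v ∂μ =
      ∫ u, (∫ r in (0 : ℝ)..exitRadius R y u, r ^ (finrank ℝ E - 1) • f (r • (u : E)))
        ∂μ.toSphere :=
  setIntegral_eq_integral_toSphere_intervalIntegral μ measurableSet_closedBall
    (fun u ↦ exitRadius_nonneg hy u)
    (fun u _ hr ↦ smul_mem_closedBall_iff_le_exitRadius hy (norm_eq_of_mem_sphere u) hr.le)
    (hf.continuousOn.integrableOn_compact (isCompact_closedBall y R))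

variable {f : E → ℝ}

theorem hasGradientAt_setIntegral_closedBall_zero (hR : 0 < R) (hf : Continuous f) :
    HasGradientAt (fun y ↦ ∫ v in closedBall y R, f v ∂μ)
      (R ^ (finrank ℝ E - 1) • ∫ u, f (R • (u : E)) • (u : E) ∂μ.toSphere) 0 := by
  set n := finrank ℝ E - 1
  let F (y : E) (u : sphere (0 : E) 1) : ℝ :=
    ∫ r in (0 : ℝ)..exitRadius R y u, r ^ n • f (r • (u : E))
  let F' (y : E) (u : sphere (0 : E) 1) : E :=
    (exitRadius R y u ^ n • f (exitRadius R y u • (u : E))) •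
      (halfChord R y u)⁻¹ • (exitRadius R y u • (u : E) - y)
  have hpolar : (fun y ↦ ∫ v in closedBall y R, f v ∂μ) =ᶠ[𝓝 0] fun y ↦ ∫ u, F y u ∂μ.toSphere := by
    filter_upwards [ball_mem_nhds 0 hR] with y hy
    exact setIntegral_closedBall_eq_integral_toSphere μ (mem_ball_zero_iff.1 hy).le hf
  have hF (y : E) (hy : y ∈ ball 0 R) (u : sphere (0 : E) 1) :
      HasGradientAt (F · u) (F' y u) y :=
    hasGradientAt_intervalIntegral_exitRadius (mem_ball_zero_iff.1 hy) u (by fun_prop)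
  have hchord : ContinuousOn (fun p : E × sphere (0 : E) 1 ↦ (halfChord R p.1 p.2)⁻¹)
      (ball 0 R ×ˢ univ) :=
    ContinuousOn.inv₀ (by fun_prop) fun p hp ↦ (halfChord_pos (mem_ball_zero_iff.1 hp.1) _).ne'
  have hgrad := hasGradientAt_integral_of_continuousOn_gradient (ν := μ.toSphere) isOpen_ball
    (F := F) (F' := F') (fun y _ ↦ by fun_prop) (by unfold Function.uncurry; fun_prop) hF
    (mem_ball_self hR)
  convert hgrad.congr_of_eventuallyEq hpolar using 1
  rw [← integral_smul]
  simp only [F', exitRadius_zero_left hR.le, halfChord_zero_left hR.le, sub_zero,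
    inv_smul_smul₀ hR.ne', smul_assoc]

theorem hasGradientAt_setIntegral_closedBall_add (hR : 0 < R) (hf : Continuous f) (x : E) :
    HasGradientAt (fun y ↦ ∫ v in closedBall 0 R, f (y + v) ∂μ)
      (R ^ (finrank ℝ E - 1) • ∫ u, f (x + R • (u : E)) • (u : E) ∂μ.toSphere) x := by
  have htranslate (h : E) : ∫ v in closedBall h R, f (x + v) ∂μ =
      ∫ v in closedBall 0 R, f (x + h + v) ∂μ := by
    simpa [add_assoc] using ((measurePreserving_add_left μ h).setIntegral_preimage_emb
      (measurableEmbedding_addLeft h) (fun v ↦ f (x + v)) (closedBall h R)).symm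
  have hzero := hasGradientAt_setIntegral_closedBall_zero μ hR (f := fun v ↦ f (x + v))
    (by fun_prop)
  simp only [htranslate] at hzero
  rw [hasGradientAt_iff_hasFDerivAt] at hzero ⊢
  simpa using (hasFDerivAt_comp_add_left (f := fun y ↦ ∫ v in closedBall 0 R, f (y + v) ∂μ)
    x).1 hzero

theorem hasGradientAt_setAverage_closedBall (hR : 0 < R) (hf : Continuous f) (x : E) :
    HasGradientAt (fun y ↦ ⨍ v in closedBall 0 R, f (y + v) ∂μ)
      ((finrank ℝ E / R ^ 2) •
        ⨍ v in closedBall 0 R, f (x + (R / ‖v‖) • v) • (R / ‖v‖) • v ∂μ) x := by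
  have hsphere := setIntegral_closedBall_comp_smul_div_norm μ hR.le
    (q := fun w ↦ f (x + w) • w) (by fun_prop)
  have hgrad := hasGradientAt_const_smul (hasGradientAt_setIntegral_closedBall_add μ hR hf x)
    (μ.real (closedBall 0 R))⁻¹
  obtain ⟨n, hn⟩ := Nat.exists_eq_add_one.2 (finrank_pos (R := ℝ) (M := E))
  have hconst : ((n + 1 : ℕ) : ℝ) / R ^ 2 * (R ^ (n + 1) / (n + 1 : ℕ)) * R = R ^ n := by
    field_simp
    ring
  simp only [setAverage_eq, hsphere]
  convert hgrad using 1
  rw [hn, Nat.add_sub_cancel, ← hconst]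
  simp only [smul_comm _ R, integral_smul]
  module

end BallAverage

theorem integral_sub_comp_neg_smul {E : Type*} [NormedAddCommGroup E] [NormedSpace ℝ E]
    [MeasurableSpace E] [MeasurableNeg E] {ν : Measure E} [ν.IsNegInvariant] {g : E → ℝ}
    (hg : Integrable (fun u ↦ g u • u) ν) :
    ∫ u, (g u - g (-u)) • u ∂ν = (2 : ℝ) • ∫ u, g u • u ∂ν := by
  calc ∫ u, (g u - g (-u)) • u ∂ν
      = ∫ u, (g u • u + g (-u) • -u) ∂ν := by simp only [sub_smul, smul_neg, ← sub_eq_add_neg]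
    _ = (∫ u, g u • u ∂ν) + ∫ u, g (-u) • -u ∂ν := integral_add hg hg.comp_neg
    _ = (2 : ℝ) • ∫ u, g u • u ∂ν := by
        rw [integral_neg_eq_self (fun u ↦ g u • u) ν, two_smul]

section UniformMeasures

variable {d : ℕ}

instance isNegInvariant_uniformBall : (uniformBall d).IsNegInvariant where
  neg_eq_self := by
    have hrestrict := (Measure.measurePreserving_neg
      (volume : Measure (EuclideanSpace ℝ (Fin d)))).restrict_preimage
        (measurableSet_closedBall (x := 0) (ε := √d))
    simp only [Set.neg_preimage, neg_closedBall, neg_zero] at hrestrict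
    rw [Measure.neg, uniformBall, Measure.map_smul]
    exact congrArg _ hrestrict.map_eq

instance isNegInvariant_uniformSphere : (uniformSphere d).IsNegInvariant where
  neg_eq_self := by
    have hneg := Measure.map_neg_eq_self (uniformBall d)
    rw [Measure.neg, uniformSphere, Measure.map_map measurable_neg (measurable_smul_div_norm _)]
    nth_rw 2 [← hneg]
    rw [Measure.map_map (measurable_smul_div_norm _) measurable_neg]
    congr 1 with v
    simp

theorem integral_uniformBall {G : Type*} [NormedAddCommGroup G] [NormedSpace ℝ G]
    (f : EuclideanSpace ℝ (Fin d) → G) :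
    ∫ v, f v ∂uniformBall d = ⨍ v in closedBall 0 √d, f v :=
  (setAverage_eq' volume f _).symm

theorem integral_uniformSphere {G : Type*} [NormedAddCommGroup G] [NormedSpace ℝ G]
    {q : EuclideanSpace ℝ (Fin d) → G} (hq : Continuous q) :
    ∫ u, q u ∂uniformSphere d = ⨍ v in closedBall 0 √d, q ((√d / ‖v‖) • v) := by
  rw [uniformSphere, integral_map (measurable_smul_div_norm _).aemeasurable
    hq.aestronglyMeasurable, integral_uniformBall]

variable [NeZero d]

theorem integrable_uniformSphere_of_continuous {G : Type*} [NormedAddCommGroup G]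
    {q : EuclideanSpace ℝ (Fin d) → G} (hq : Continuous q) : Integrable q (uniformSphere d) := by
  have hd : 0 < √(d : ℝ) := Real.sqrt_pos.2 (Nat.cast_pos.2 (NeZero.pos d))
  rw [uniformSphere, integrable_map_measure hq.aestronglyMeasurable
    (measurable_smul_div_norm _).aemeasurable]
  exact (integrableOn_comp_smul_div_norm volume hq _).integrable.smul_measure
    (ENNReal.inv_ne_top.2 (measure_closedBall_pos volume 0 hd).ne')

variable {f : EuclideanSpace ℝ (Fin d) → ℝ}

theorem hasGradientAt_integral_uniformBall (hf : Continuous f) (x : EuclideanSpace ℝ (Fin d)) :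
    HasGradientAt (fun y ↦ ∫ v, f (y + v) ∂uniformBall d)
      (∫ u, f (x + u) • u ∂uniformSphere d) x := by
  have hd : 0 < √(d : ℝ) := Real.sqrt_pos.2 (Nat.cast_pos.2 (NeZero.pos d))
  have hunit : (d : ℝ) / √d ^ 2 = 1 := by
    rw [Real.sq_sqrt d.cast_nonneg, div_self (NeZero.ne _)]
  simp only [integral_uniformBall]
  rw [integral_uniformSphere (by fun_prop)]
  simpa only [finrank_euclideanSpace_fin, hunit, one_smul] using
    hasGradientAt_setAverage_closedBall volume hd hf x

theorem hasGradientAt_integral_uniformBall_smul {α : ℝ} (hα : α ≠ 0) (hf : Continuous f)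
    (x : EuclideanSpace ℝ (Fin d)) :
    HasGradientAt (fun y ↦ ∫ v, f (y + α • v) ∂uniformBall d)
      (α⁻¹ • ∫ u, f (x + α • u) • u ∂uniformSphere d) x := by
  have hgrad := hasGradientAt_integral_uniformBall (f := fun w ↦ f (α • w)) (by fun_prop) (α⁻¹ • x)
  simpa only [smul_add, smul_inv_smul₀ hα] using hasGradientAt_comp_smul hgrad

theorem integral_twoPoint_uniformSphere (α : ℝ) (hf : Continuous f)
    (x : EuclideanSpace ℝ (Fin d)) :
    ∫ u, ((f (x + α • u) - f (x - α • u)) / (2 * α)) • u ∂uniformSphere d =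
      α⁻¹ • ∫ u, f (x + α • u) • u ∂uniformSphere d := by
  have hint : Integrable (fun u ↦ f (x + α • u) • u) (uniformSphere d) :=
    integrable_uniformSphere_of_continuous (by fun_prop)
  have hsymm := integral_sub_comp_neg_smul hint
  simp only [smul_neg, ← sub_eq_add_neg] at hsymm
  simp only [div_eq_inv_mul, mul_smul, integral_smul, hsymm, mul_inv]
  module

end UniformMeasures

theorem stmt0_general (d : ℕ) (α : ℝ) (hα : α ≠ 0) (f : EuclideanSpace ℝ (Fin d) → ℝ)
    (hf : Continuous f) :
    Differentiable ℝ (fun x ↦ ∫ v, f (x + α • v) ∂uniformBall d) ∧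
    ∀ x : EuclideanSpace ℝ (Fin d),
      ∫ u, ((f (x + α • u) - f (x - α • u)) / (2 * α)) • u ∂uniformSphere d =
        gradient (fun x' ↦ ∫ v, f (x' + α • v) ∂uniformBall d) x := by
  rcases eq_zero_or_neZero d with rfl | _
  · exact ⟨fun x ↦ (hasFDerivAt_of_subsingleton _ x).differentiableAt,
      fun _ ↦ Subsingleton.elim _ _⟩
  have hgrad := hasGradientAt_integral_uniformBall_smul hα hf
  exact ⟨fun x ↦ (hgrad x).differentiableAt, fun x ↦
    (integral_twoPoint_uniformSphere α hf x).trans (hgrad x).gradient.symm⟩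

/-- If `f : ℝ^d → ℝ` is differentiable with `ℓ`-Lipschitz gradient and
`α > 0`, then the smoothed function `f_α x = E_v [f (x + α v)]` (`v` uniform on the ball of
radius `√d`) is differentiable, and the two-point zeroth-order estimator
`((f(x + αu) − f(x − αu))/(2α)) • u` (`u` uniform on the sphere of radius `√d`) is an
unbiased estimator of its gradient. -/
theorem stmt0 (d : ℕ) (ℓ α : ℝ) (hα : 0 < α)
    (f : EuclideanSpace ℝ (Fin d) → ℝ) (hf : Differentiable ℝ f)
    (hlip : ∀ z₁ z₂, ‖gradient f z₁ - gradient f z₂‖ ≤ ℓ * ‖z₁ - z₂‖) :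
    Differentiable ℝ (fun x => ∫ v, f (x + α • v) ∂(uniformBall d)) ∧
    ∀ x : EuclideanSpace ℝ (Fin d),
      (∫ u, ((f (x + α • u) - f (x - α • u)) / (2 * α)) • u ∂(uniformSphere d))
        = gradient (fun x' => ∫ v, f (x' + α • v) ∂(uniformBall d)) x :=
  stmt0_general d α hα.ne' f hf.continuous
end

section
/- Let f : ℝ^d → ℝ be ℓ-Lipschitz smooth and let α > 0. Then for every x ∈ ℝ^d, the gradient of the smoothed function satisfies the bias bound ‖∇f(x) − ∇f_α(x)‖ ≤ (ℓ/2)·α·d^{3/2}. -/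
open MeasureTheory Metric

/-!
Write the smoothed function as `x ↦ E[f (x + X)]` for a random perturbation `X`. Differentiating
under the expectation, its derivative at `x` is `E[f' (x + X)]`, so the bias is
`E[f' x - f' (x + X)]`, whose norm is at most `ℓ * E‖X‖`. In dimension `n` the mean norm of a
uniform point of a ball of radius `r` is `n / (n + 1) * r` (polar coordinates). For `r = √n` this is
at most `n ^ (3 / 2) / 2`, because `n + 1 ≥ 2`.
-/

open ProbabilityTheory Module
open scoped NNReal

section RandomPerturbation

variable {Ω E F : Type*} [MeasurableSpace Ω] {P : Measure Ω}
  [NormedAddCommGroup E] [NormedSpace ℝ E] [NormedAddCommGroup F] [NormedSpace ℝ F]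
  {f : E → F} {X : Ω → E} {x : E}

lemma integrable_fderiv_comp_const_add [IsFiniteMeasure P] {K : ℝ≥0}
    (hlip : LipschitzWith K (fderiv ℝ f)) (hX : Integrable X P) :
    Integrable (fun ω ↦ fderiv ℝ f (x + X ω)) P := by
  have hmeas : AEStronglyMeasurable (fun ω ↦ fderiv ℝ f (x + X ω)) P :=
    (hlip.continuous.comp (continuous_const_add x)).comp_aestronglyMeasurable hX.1
  refine ((integrable_const ‖fderiv ℝ f x‖).add (hX.norm.const_mul K)).mono' hmeas (.of_forall ?_)
  intro ω
  calc ‖fderiv ℝ f (x + X ω)‖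
      ≤ ‖fderiv ℝ f x‖ + ‖fderiv ℝ f (x + X ω) - fderiv ℝ f x‖ := norm_le_norm_add_norm_sub' _ _
    _ ≤ ‖fderiv ℝ f x‖ + K * ‖X ω‖ := by
      gcongr
      simpa using hlip.norm_sub_le (x + X ω) x

lemma hasFDerivAt_integral_comp_add [IsFiniteMeasure P] {K : ℝ≥0}
    (hf : Differentiable ℝ f) (hlip : LipschitzWith K (fderiv ℝ f)) (hX : Integrable X P)
    (hfX : Integrable (fun ω ↦ f (x + X ω)) P) :
    HasFDerivAt (fun y ↦ ∫ ω, f (y + X ω) ∂P) (∫ ω, fderiv ℝ f (x + X ω) ∂P) x := by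
  have hf' : Integrable (fun ω ↦ fderiv ℝ f (x + X ω)) P := integrable_fderiv_comp_const_add hlip hX
  refine hasFDerivAt_integral_of_dominated_of_fderiv_le
    (F' := fun y ω ↦ fderiv ℝ f (y + X ω)) (bound := fun ω ↦ ‖fderiv ℝ f (x + X ω)‖ + K)
    (ball_mem_nhds x one_pos) (.of_forall fun y ↦ ?_) hfX hf'.1 (.of_forall fun ω y hy ↦ ?_)
    (hf'.norm.add (integrable_const _)) (.of_forall fun ω y _ ↦ ?_)
  · exact (hf.continuous.comp (continuous_const_add y)).comp_aestronglyMeasurable hX.1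
  · calc ‖fderiv ℝ f (y + X ω)‖
        ≤ ‖fderiv ℝ f (x + X ω)‖ + ‖fderiv ℝ f (y + X ω) - fderiv ℝ f (x + X ω)‖ :=
          norm_le_norm_add_norm_sub' _ _
      _ ≤ ‖fderiv ℝ f (x + X ω)‖ + K * ‖y - x‖ := by
        gcongr
        simpa using hlip.norm_sub_le (y + X ω) (x + X ω)
      _ ≤ ‖fderiv ℝ f (x + X ω)‖ + K := by
        gcongr
        exact mul_le_of_le_one_right K.2 (mem_ball_iff_norm.1 hy).le
  · exact (hasFDerivAt_comp_add_right (X ω)).2 (hf (y + X ω)).hasFDerivAt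

lemma norm_fderiv_sub_fderiv_integral_comp_add_le [CompleteSpace F] [IsProbabilityMeasure P]
    {ℓ : ℝ} (hf : Differentiable ℝ f)
    (hlip : ∀ z₁ z₂, ‖fderiv ℝ f z₁ - fderiv ℝ f z₂‖ ≤ ℓ * ‖z₁ - z₂‖) (hX : Integrable X P)
    (hfX : Integrable (fun ω ↦ f (x + X ω)) P) :
    ‖fderiv ℝ f x - fderiv ℝ (fun y ↦ ∫ ω, f (y + X ω) ∂P) x‖ ≤ ℓ * ∫ ω, ‖X ω‖ ∂P := by
  have hlip' : LipschitzWith ℓ.toNNReal (fderiv ℝ f) :=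
    .of_dist_le' fun z₁ z₂ ↦ by simpa only [dist_eq_norm] using hlip z₁ z₂
  have hbias : fderiv ℝ f x - fderiv ℝ (fun y ↦ ∫ ω, f (y + X ω) ∂P) x
      = ∫ ω, (fderiv ℝ f x - fderiv ℝ f (x + X ω)) ∂P := by
    rw [(hasFDerivAt_integral_comp_add hf hlip' hX hfX).fderiv,
      integral_sub (integrable_const _) (integrable_fderiv_comp_const_add hlip' hX),
      integral_const, probReal_univ, one_smul]
  rw [hbias, ← integral_const_mul]
  refine norm_integral_le_of_norm_le (hX.norm.const_mul ℓ) (.of_forall fun ω ↦ ?_)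
  simpa using hlip x (x + X ω)

end RandomPerturbation

lemma integrable_cond_of_continuous {E F : Type*} [TopologicalSpace E] [T2Space E]
    [MeasurableSpace E] [OpensMeasurableSpace E] [NormedAddCommGroup F]
    [SecondCountableTopologyEither E F] {μ : Measure E} [IsFiniteMeasureOnCompacts μ] {s : Set E}
    {g : E → F} (hg : Continuous g) (hs : IsCompact s) : Integrable g μ[|s] := by
  by_cases hμs : μ s = 0
  · simp [cond_eq_zero_of_meas_eq_zero hμs]
  · exact (hg.continuousOn.integrableOn_compact hs).smul_measure (ENNReal.inv_ne_top.2 hμs)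

section Ball

variable {E F : Type*} [NormedAddCommGroup E] [NormedSpace ℝ E] [FiniteDimensional ℝ E]
  [MeasurableSpace E] [BorelSpace E] (μ : Measure E) [μ.IsAddHaarMeasure]
  [NormedAddCommGroup F] [NormedSpace ℝ F] {r : ℝ}

lemma setIntegral_closedBall_fun_norm [Nontrivial E] (hr : 0 ≤ r) (g : ℝ → F) :
    ∫ v in closedBall (0 : E) r, g ‖v‖ ∂μ =
      finrank ℝ E • μ.real (ball (0 : E) 1) • ∫ t in 0..r, t ^ (finrank ℝ E - 1) • g t := by
  have hindicator (v : E) :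
      (closedBall 0 r).indicator (fun v ↦ g ‖v‖) v = (Set.Iic r).indicator g ‖v‖ := by
    simp [Set.indicator]
  have hradial (t : ℝ) : t ^ (finrank ℝ E - 1) • (Set.Iic r).indicator g t =
      (Set.Iic r).indicator (fun t ↦ t ^ (finrank ℝ E - 1) • g t) t := by
    simp [Set.indicator]
  rw [← integral_indicator measurableSet_closedBall]
  simp only [hindicator]
  rw [integral_fun_norm_addHaar]
  simp only [hradial]
  rw [setIntegral_indicator measurableSet_Iic, Set.Ioi_inter_Iic,
    ← intervalIntegral.integral_of_le hr]

lemma integral_norm_cond_closedBall (hr : 0 < r) :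
    ∫ v, ‖v‖ ∂μ[|closedBall (0 : E) r] = finrank ℝ E / (finrank ℝ E + 1) * r := by
  cases subsingleton_or_nontrivial E
  · simp [finrank_zero_of_subsingleton, Subsingleton.elim _ (0 : E)]
  have hdim : finrank ℝ E - 1 + 1 = finrank ℝ E := Nat.sub_add_cancel finrank_pos
  have hradial : ∫ t in 0..r, t ^ (finrank ℝ E - 1) • t =
      r ^ (finrank ℝ E + 1) / (finrank ℝ E + 1) := by
    simp [← pow_succ, hdim]
  have hvol : μ.real (ball (0 : E) 1) ≠ 0 :=
    (measureReal_ne_zero_iff measure_ball_lt_top.ne).2 (measure_ball_pos μ 0 one_pos).ne'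
  rw [ProbabilityTheory.cond, integral_smul_measure, ENNReal.toReal_inv, ← measureReal_def,
    Measure.addHaar_real_closedBall μ 0 hr.le,
    setIntegral_closedBall_fun_norm μ hr.le (fun t : ℝ ↦ t), hradial, nsmul_eq_mul]
  simp only [smul_eq_mul]
  field_simp
  ring

lemma norm_fderiv_sub_fderiv_integral_cond_closedBall_le [CompleteSpace F] {f : E → F} {ℓ : ℝ}
    (hf : Differentiable ℝ f)
    (hlip : ∀ z₁ z₂, ‖fderiv ℝ f z₁ - fderiv ℝ f z₂‖ ≤ ℓ * ‖z₁ - z₂‖) (hr : 0 < r) (α : ℝ) (x : E) :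
    ‖fderiv ℝ f x - fderiv ℝ (fun y ↦ ∫ v, f (y + α • v) ∂μ[|closedBall (0 : E) r]) x‖ ≤
      ℓ * |α| * (finrank ℝ E / (finrank ℝ E + 1) * r) := by
  have : IsProbabilityMeasure μ[|closedBall (0 : E) r] := cond_isProbabilityMeasure_of_finite
    (measure_closedBall_pos μ 0 hr).ne' measure_closedBall_lt_top.ne
  have hball : IsCompact (closedBall (0 : E) r) := isCompact_closedBall 0 r
  have hf_cont : Continuous f := hf.continuous
  have hX : Integrable (α • · : E → E) μ[|closedBall (0 : E) r] :=
    integrable_cond_of_continuous (continuous_const_smul α) hball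
  have hfX : Integrable (fun v ↦ f (x + α • v)) μ[|closedBall (0 : E) r] :=
    integrable_cond_of_continuous (by fun_prop) hball
  calc _ ≤ ℓ * ∫ v, ‖α • v‖ ∂μ[|closedBall (0 : E) r] :=
        norm_fderiv_sub_fderiv_integral_comp_add_le hf hlip hX hfX
    _ = _ := by
      simp only [norm_smul, Real.norm_eq_abs, integral_const_mul,
        integral_norm_cond_closedBall μ hr, mul_assoc]

end Ball

lemma div_add_one_mul_sqrt_le (n : ℕ) :
    (n : ℝ) / (n + 1) * √n ≤ (n : ℝ) ^ ((3 : ℝ) / 2) / 2 := by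
  obtain rfl | hn := n.eq_zero_or_pos
  · simp
  have hpow : (n : ℝ) ^ ((3 : ℝ) / 2) = n * √n := by
    rw [Real.sqrt_eq_rpow, show (3 : ℝ) / 2 = 1 + 1 / 2 by norm_num,
      Real.rpow_add (by positivity), Real.rpow_one]
  calc (n : ℝ) / (n + 1) * √n ≤ n / 2 * √n := by
        gcongr
        exact_mod_cast Nat.succ_le_succ hn
    _ = (n : ℝ) ^ ((3 : ℝ) / 2) / 2 := by rw [hpow]; ring

theorem stmt1_general {E F : Type*} [NormedAddCommGroup E] [NormedSpace ℝ E]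
    [FiniteDimensional ℝ E] [MeasurableSpace E] [BorelSpace E] (μ : Measure E)
    [μ.IsAddHaarMeasure] [NormedAddCommGroup F] [NormedSpace ℝ F] [CompleteSpace F]
    {f : E → F} {ℓ : ℝ} (hf : Differentiable ℝ f)
    (hlip : ∀ z₁ z₂, ‖fderiv ℝ f z₁ - fderiv ℝ f z₂‖ ≤ ℓ * ‖z₁ - z₂‖) (α : ℝ) (x : E) :
    ‖fderiv ℝ f x - fderiv ℝ (fun y ↦ ∫ v, f (y + α • v) ∂μ[|closedBall (0 : E) √(finrank ℝ E)]) x‖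
      ≤ ℓ / 2 * |α| * (finrank ℝ E : ℝ) ^ ((3 : ℝ) / 2) := by
  cases subsingleton_or_nontrivial E
  · simp [finrank_zero_of_subsingleton, Subsingleton.elim (fderiv ℝ f x - _) 0]
  have hℓ : 0 ≤ ℓ := by
    obtain ⟨v, hv⟩ := exists_ne (0 : E)
    exact nonneg_of_mul_nonneg_left ((norm_nonneg _).trans (hlip v 0)) (by simpa using hv)
  have hr : 0 < √(finrank ℝ E : ℝ) := Real.sqrt_pos.2 (Nat.cast_pos.2 finrank_pos)
  calc _ ≤ ℓ * |α| * (finrank ℝ E / (finrank ℝ E + 1) * √(finrank ℝ E)) :=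
        norm_fderiv_sub_fderiv_integral_cond_closedBall_le μ hf hlip hr α x
    _ ≤ ℓ * |α| * ((finrank ℝ E : ℝ) ^ ((3 : ℝ) / 2) / 2) := by
      gcongr
      exact div_add_one_mul_sqrt_le _
    _ = ℓ / 2 * |α| * (finrank ℝ E : ℝ) ^ ((3 : ℝ) / 2) := by ring

lemma uniformBall_eq_cond (d : ℕ) :
    uniformBall d = volume[|closedBall (0 : EuclideanSpace ℝ (Fin d)) √d] :=
  rfl

lemma norm_gradient_sub_gradient {E : Type*} [NormedAddCommGroup E] [InnerProductSpace ℝ E]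
    [CompleteSpace E] (f g : E → ℝ) (x y : E) :
    ‖gradient f x - gradient g y‖ = ‖fderiv ℝ f x - fderiv ℝ g y‖ := by
  rw [gradient, gradient, ← map_sub, LinearIsometryEquiv.norm_map]

/-- If `f : ℝ^d → ℝ` is differentiable with `ℓ`-Lipschitz gradient and
`α > 0`, then the gradient of the smoothed function `f_α x = E_v [f (x + α v)]`
(`v` uniform on the ball of radius `√d`) satisfies the bias bound
`‖∇f(x) − ∇f_α(x)‖ ≤ (ℓ/2)·α·d^(3/2)`. -/
theorem stmt1 (d : ℕ) (ℓ α : ℝ) (hα : 0 < α)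
    (f : EuclideanSpace ℝ (Fin d) → ℝ) (hf : Differentiable ℝ f)
    (hlip : ∀ z₁ z₂, ‖gradient f z₁ - gradient f z₂‖ ≤ ℓ * ‖z₁ - z₂‖) :
    ∀ x : EuclideanSpace ℝ (Fin d),
      ‖gradient f x - gradient (fun x' => ∫ v, f (x' + α • v) ∂(uniformBall d)) x‖
        ≤ ℓ / 2 * α * (d : ℝ) ^ ((3 : ℝ) / 2) := by
  simp only [norm_gradient_sub_gradient] at hlip ⊢
  simpa [uniformBall_eq_cond, abs_of_pos hα] using stmt1_general volume hf hlip α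
end

section
/- Let F₁, F₂ : ℝ^d × ℝ^{d'} → ℝ be differentiable, let τ > 0 be such that for every θ ∈ ℝ^d the function s ↦ F₂(θ, s) is τ-strongly convex, and let λ > 0. Define the penalized objective G_λ(θ, p, s) := F₁(θ, p) + λ(F₂(θ, p) − F₂(θ, s)). If a point (θ_ε, p_ε, s_ε) satisfies ‖∇_s G_λ(θ_ε, p_ε, s_ε)‖ ≤ ε, then the lower-level suboptimality is bounded by F₂(θ_ε, s_ε) − min_{s ∈ ℝ^{d'}} F₂(θ_ε, s) ≤ ε²/(τλ²). -/
/-!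
A `τ`-strongly convex `f` lies above the paraboloid `f x + f' (y - x) + τ / 2 * ‖x - y‖ ^ 2`, and
minimizing that lower bound over `y` gives the Polyak–Łojasiewicz inequality
`f x - inf f ≤ ‖f'‖ ^ 2 / (2 * τ)`. The penalized objective depends on `s` only through
`-λ F₂ θ s`, so an `ε`-small partial gradient in `s` means `‖∇ (F₂ θ) s‖ ≤ ε / λ`.
-/

open Filter Set Topology

section NormedSpace

variable {E : Type*} [NormedAddCommGroup E] [NormedSpace ℝ E] {S : Set E} {f : E → ℝ} {x y : E}

theorem uniformConvexOn_slope_le {φ : ℝ → ℝ} (hf : UniformConvexOn S φ f) (hx : x ∈ S)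
    (hy : y ∈ S) {t : ℝ} (ht : t ∈ Ioc 0 1) :
    slope (fun r : ℝ ↦ f (x + r • (y - x))) 0 t ≤ f y - f x - (1 - t) * φ ‖x - y‖ := by
  have hconv : f (x + t • (y - x)) ≤ (1 - t) * f x + t * f y - (1 - t) * t * φ ‖x - y‖ := by
    have hpoint : x + t • (y - x) = (1 - t) • x + t • y := by module
    rw [hpoint]
    exact hf.2 hx hy (sub_nonneg.2 ht.2) ht.1.le (sub_add_cancel 1 t)
  rw [slope_def_field, zero_smul, add_zero, sub_zero, div_le_iff₀ ht.1]
  linarith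

theorem uniformConvexOn_add_lineDeriv_add_le {φ : ℝ → ℝ} {f' : ℝ} (hf : UniformConvexOn S φ f)
    (hx : x ∈ S) (hy : y ∈ S) (hf' : HasLineDerivWithinAt ℝ f f' S x (y - x)) :
    f x + f' + φ ‖x - y‖ ≤ f y := by
  have hsegment : Ioo (0 : ℝ) 1 ⊆ (fun t ↦ x + t • (y - x)) ⁻¹' S := fun t ht ↦
    hf.1.add_smul_sub_mem hx hy ⟨ht.1.le, ht.2.le⟩
  have hslope : Tendsto (slope (fun t : ℝ ↦ f (x + t • (y - x))) 0) (𝓝[Ioo 0 1] 0) (𝓝 f') :=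
    (hasDerivWithinAt_iff_tendsto_slope' left_notMem_Ioo).1 (HasDerivWithinAt.mono hf' hsegment)
  have hbound : Tendsto (fun t : ℝ ↦ f y - f x - (1 - t) * φ ‖x - y‖) (𝓝[Ioo 0 1] 0)
      (𝓝 (f y - f x - (1 - 0) * φ ‖x - y‖)) :=
    (Continuous.tendsto (by fun_prop) 0).mono_left nhdsWithin_le_nhds
  have : (𝓝[Ioo (0 : ℝ) 1] 0).NeBot := left_nhdsWithin_Ioo_neBot zero_lt_one
  have hlim : f' ≤ f y - f x - (1 - 0) * φ ‖x - y‖ :=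
    le_of_tendsto_of_tendsto hslope hbound <| eventually_mem_nhdsWithin.mono fun t ht ↦
      uniformConvexOn_slope_le hf hx hy (Ioo_subset_Ioc_self ht)
  linarith

theorem strongConvexOn_sub_le_norm_fderiv_sq_div {m : ℝ} {f' : StrongDual ℝ E} (hm : 0 < m)
    (hf : StrongConvexOn S m f) (hx : x ∈ S) (hy : y ∈ S) (hf' : HasFDerivWithinAt f f' S x) :
    f x - f y ≤ ‖f'‖ ^ 2 / (2 * m) := by
  have htangent : f x + f' (y - x) + m / 2 * ‖x - y‖ ^ 2 ≤ f y :=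
    uniformConvexOn_add_lineDeriv_add_le hf hx hy (hf'.hasLineDerivWithinAt (y - x))
  have hdual : -f' (y - x) ≤ ‖f'‖ * ‖x - y‖ := by
    rw [← map_neg, neg_sub]
    exact (le_abs_self _).trans (f'.le_opNorm (x - y))
  have hsquare : ‖f'‖ * ‖x - y‖ - m / 2 * ‖x - y‖ ^ 2 ≤ ‖f'‖ ^ 2 / (2 * m) := by
    rw [le_div_iff₀ (by positivity)]
    linarith [sq_nonneg (‖f'‖ - m * ‖x - y‖)]
  linarith

end NormedSpace

section InnerProductSpace

variable {Θ E : Type*} [NormedAddCommGroup E] [InnerProductSpace ℝ E] [CompleteSpace E]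

theorem strongConvexOn_sub_iInf_le_norm_gradient_sq_div {m : ℝ} {f : E → ℝ} {x : E} (hm : 0 < m)
    (hf : StrongConvexOn univ m f) (hfx : DifferentiableAt ℝ f x) :
    f x - ⨅ y, f y ≤ ‖gradient f x‖ ^ 2 / (2 * m) := by
  refine sub_le_comm.1 (le_ciInf fun y ↦ sub_le_comm.1 ?_)
  rw [gradient, LinearIsometryEquiv.norm_map]
  exact strongConvexOn_sub_le_norm_fderiv_sq_div hm hf (mem_univ x) (mem_univ y)
    hfx.hasFDerivAt.hasFDerivWithinAt

/-- The penalized objective `G_λ (θ, p, s) = F₁ (θ, p) + λ (F₂ (θ, p) - F₂ (θ, s))` of a bilevel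
problem with upper level `F₁` and lower level `F₂`, both curried so that its partial gradient in
`s` is the gradient of `penalizedObjective F₁ F₂ lam θ p`. -/
def penalizedObjective {P : Type*} (F₁ F₂ : Θ → P → ℝ) (lam : ℝ) (θ : Θ) (p s : P) : ℝ :=
  F₁ θ p + lam * (F₂ θ p - F₂ θ s)

theorem gradient_penalizedObjective (F₁ F₂ : Θ → E → ℝ) (lam : ℝ) (θ : Θ) (p s : E) :
    gradient (penalizedObjective F₁ F₂ lam θ p) s = -lam • gradient (F₂ θ) s := by
  have hfderiv : fderiv ℝ (penalizedObjective F₁ F₂ lam θ p) s = -lam • fderiv ℝ (F₂ θ) s :=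
    calc
      _ = lam • fderiv ℝ (fun s ↦ F₂ θ p - F₂ θ s) s :=
        (fderiv_const_add _).trans (congrFun (fderiv_const_smul_field lam) s)
      _ = -lam • fderiv ℝ (F₂ θ) s := by rw [fderiv_const_sub, smul_neg, neg_smul]
  rw [gradient, gradient, hfderiv, map_smulₛₗ, conj_trivial]

theorem stmt3_general {F₁ F₂ : Θ → E → ℝ} {τ lam ε : ℝ} (hτ : 0 < τ) (hlam : lam ≠ 0) {θ : Θ}
    {p s : E} (hF₂ : DifferentiableAt ℝ (F₂ θ) s) (hsc : StrongConvexOn univ τ (F₂ θ))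
    (hstat : ‖gradient (penalizedObjective F₁ F₂ lam θ p) s‖ ≤ ε) :
    F₂ θ s - ⨅ y, F₂ θ y ≤ ε ^ 2 / (2 * τ * lam ^ 2) := by
  have hgrad : lam ^ 2 * ‖gradient (F₂ θ) s‖ ^ 2 ≤ ε ^ 2 := by
    rw [gradient_penalizedObjective, norm_smul, norm_neg] at hstat
    simpa only [mul_pow, Real.norm_eq_abs, sq_abs] using
      pow_le_pow_left₀ (by positivity) hstat 2
  calc
    F₂ θ s - ⨅ y, F₂ θ y ≤ ‖gradient (F₂ θ) s‖ ^ 2 / (2 * τ) :=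
      strongConvexOn_sub_iInf_le_norm_gradient_sq_div hτ hsc hF₂
    _ = lam ^ 2 * ‖gradient (F₂ θ) s‖ ^ 2 / (2 * τ * lam ^ 2) := by field_simp
    _ ≤ ε ^ 2 / (2 * τ * lam ^ 2) := by gcongr

end InnerProductSpace

/-- Let `F₁ F₂ : ℝ^d × ℝ^{d'} → ℝ` be differentiable, let `τ > 0` be such
that `s ↦ F₂ θ s` is `τ`-strongly convex for every `θ`, and let `λ > 0`.  For the penalized
objective `G_λ (θ, p, s) = F₁ θ p + λ (F₂ θ p − F₂ θ s)`, if a point `(θε, pε, sε)`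
satisfies `‖∇ₛ G_λ (θε, pε, sε)‖ ≤ ε`, then
`F₂ θε sε − inf_s F₂ θε s ≤ ε² / (τ λ²)`. -/
theorem stmt3 (d d' : ℕ) (τ lam ε : ℝ) (hτ : 0 < τ) (hlam : 0 < lam) (hε : 0 ≤ ε)
    (F₁ F₂ : EuclideanSpace ℝ (Fin d) → EuclideanSpace ℝ (Fin d') → ℝ)
    (hF₁ : Differentiable ℝ (fun z : EuclideanSpace ℝ (Fin d) × EuclideanSpace ℝ (Fin d') =>
      F₁ z.1 z.2))
    (hF₂ : Differentiable ℝ (fun z : EuclideanSpace ℝ (Fin d) × EuclideanSpace ℝ (Fin d') =>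
      F₂ z.1 z.2))
    (hsc : ∀ θ, StrongConvexOn Set.univ τ (fun s => F₂ θ s))
    (θε : EuclideanSpace ℝ (Fin d)) (pε sε : EuclideanSpace ℝ (Fin d'))
    (hstat : ‖gradient (fun s => F₁ θε pε + lam * (F₂ θε pε - F₂ θε s)) sε‖ ≤ ε) :
    F₂ θε sε - (⨅ s, F₂ θε s) ≤ ε ^ 2 / (τ * lam ^ 2) := by
  have hF₂s : DifferentiableAt ℝ (F₂ θε) sε := (hF₂ (θε, sε)).comp sε (by fun_prop)
  exact (stmt3_general hτ hlam.ne' hF₂s (hsc θε) hstat).trans (by gcongr; linarith)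
end

section
/- Let f : ℝ^D × ℝ^{d'} → ℝ be ℓ-Lipschitz smooth, and suppose that for a fixed x ∈ ℝ^D the map y ↦ f(x, y) is τ-strongly concave with unique maximizer y*(x). Let y ∈ ℝ^{d'}, and let G be a random vector in ℝ^{d'} with E[G] = ∇_y f(x, y) and E[‖G − ∇_y f(x, y)‖²] ≤ σ²/B. Set the step size η = 1/(2ℓ) and define the stochastic gradient ascent step y⁺ := y + ηG. Then E[‖y⁺ − y*(x)‖²] ≤ (1 − τ/(4ℓ))·‖y − y*(x)‖² + σ²/(4ℓ²B). -/
open MeasureTheory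

/-- `ℝ^D × ℝ^{d'}` with the Euclidean (`L²`) product norm. -/
abbrev EuclideanProd (D d' : ℕ) :=
  WithLp 2 (EuclideanSpace ℝ (Fin D) × EuclideanSpace ℝ (Fin d'))

/-- The point of `ℝ^D × ℝ^{d'}` (with the Euclidean product norm) with components `x, y`. -/
noncomputable def euclidPair {D d' : ℕ} (x : EuclideanSpace ℝ (Fin D))
    (y : EuclideanSpace ℝ (Fin d')) : EuclideanProd D d' :=
  (WithLp.equiv 2 (EuclideanSpace ℝ (Fin D) × EuclideanSpace ℝ (Fin d'))).symm (x, y)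

/-!
Write `h = f (x, ·)` and `Δ = h y* - h y`. A gradient step of length `1 / ℓ` from `y` raises `h`
by at least `‖∇ h y‖² / (2 ℓ)`, so `‖∇ h y‖² ≤ 2 ℓ Δ`, while strong concavity gives
`⟪∇ h y, y* - y⟫ ≥ Δ + τ / 2 * ‖y - y*‖²`. Expanding the square, the exact gradient step satisfies
`‖y + η ∇ h y - y*‖² ≤ (1 - η τ) ‖y - y*‖² - 2 η (1 - η ℓ) Δ`, and the last term is nonpositive for
`η ≤ 1 / ℓ`. The noise has mean zero, so it contributes only `η²` times the variance. The step
`η = 1 / (2 ℓ)` thus contracts at the rate `1 - τ / (2 ℓ) ≤ 1 - τ / (4 ℓ)`.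
-/

open Filter Topology
open scoped Gradient RealInnerProductSpace

section Restriction

variable {E F : Type*} [NormedAddCommGroup E] [InnerProductSpace ℝ E] [CompleteSpace E]
  [NormedAddCommGroup F] [InnerProductSpace ℝ F] [CompleteSpace F] {f : E → ℝ}

lemma gradient_comp_affineIsometry (φ : F →ᵃⁱ[ℝ] E) {y : F}
    (hdiff : DifferentiableAt ℝ f (φ y)) :
    ∇ (f ∘ φ) y = φ.linearIsometry.toContinuousLinearMap.adjoint (∇ f (φ y)) := by
  refine ext_inner_right ℝ fun u => ?_
  have hφ : HasFDerivAt φ φ.linearIsometry.toContinuousLinearMap y :=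
    φ.toContinuousAffineMap.hasFDerivAt
  rw [ContinuousLinearMap.adjoint_inner_left, inner_gradient_left, inner_gradient_left,
    (hdiff.hasFDerivAt.comp y hφ).fderiv]
  rfl

lemma norm_gradient_comp_affineIsometry_sub_le (hdiff : Differentiable ℝ f) {ℓ : ℝ}
    (hlip : ∀ z₁ z₂, ‖∇ f z₁ - ∇ f z₂‖ ≤ ℓ * ‖z₁ - z₂‖) (φ : F →ᵃⁱ[ℝ] E) (y₁ y₂ : F) :
    ‖∇ (f ∘ φ) y₁ - ∇ (f ∘ φ) y₂‖ ≤ ℓ * ‖y₁ - y₂‖ := by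
  rw [gradient_comp_affineIsometry φ (hdiff _), gradient_comp_affineIsometry φ (hdiff _), ← map_sub]
  calc ‖φ.linearIsometry.toContinuousLinearMap.adjoint (∇ f (φ y₁) - ∇ f (φ y₂))‖
      ≤ 1 * ‖∇ f (φ y₁) - ∇ f (φ y₂)‖ := by
        refine ContinuousLinearMap.le_of_opNorm_le _ ?_ _
        rw [LinearIsometryEquiv.norm_map]
        exact φ.linearIsometry.norm_toContinuousLinearMap_le
    _ ≤ ℓ * ‖φ y₁ - φ y₂‖ := by rw [one_mul]; exact hlip _ _
    _ = ℓ * ‖y₁ - y₂‖ := by rw [← dist_eq_norm, φ.dist_map, dist_eq_norm]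

end Restriction

/-- The inclusion `y ↦ (x, y)` of the slice over `x`, as an affine isometry; restricting along it
turns joint smoothness of `f` into smoothness of `f (x, ·)`. -/
noncomputable def euclidPairAffineIsometry {D : ℕ} (d' : ℕ) (x : EuclideanSpace ℝ (Fin D)) :
    EuclideanSpace ℝ (Fin d') →ᵃⁱ[ℝ] EuclideanProd D d' where
  toFun := euclidPair x
  linear := (WithLp.linearEquiv 2 ℝ _).symm.toLinearMap ∘ₗ LinearMap.inr ℝ _ _
  map_vadd' y v := by
    apply (WithLp.equiv 2 _).injective
    simp [euclidPair]
  norm_map v := WithLp.norm_toLp_snd 2 _ _ v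

section SmoothAscent

variable {E : Type*} [NormedAddCommGroup E] [InnerProductSpace ℝ E] [CompleteSpace E]
  {h : E → ℝ} {ℓ : ℝ}

lemma hasDerivAt_comp_add_smul {y u g : E} {t : ℝ} (hg : HasGradientAt h g (y + t • u)) :
    HasDerivAt (fun s : ℝ => h (y + s • u)) ⟪g, u⟫ t := by
  have hline : HasDerivAt (fun s : ℝ => y + s • u) u t := by
    simpa using ((hasDerivAt_id t).smul_const u).const_add y
  exact hg.hasFDerivAt.comp_hasDerivAt t hline

lemma neg_mul_norm_sq_le_inner_gradient_sub
    (hlip : ∀ z₁ z₂, ‖∇ h z₁ - ∇ h z₂‖ ≤ ℓ * ‖z₁ - z₂‖) (y u : E) {t : ℝ} (ht : 0 ≤ t) :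
    -(ℓ * t * ‖u‖ ^ 2) ≤ ⟪∇ h (y + t • u) - ∇ h y, u⟫ := by
  have hgrad : ‖∇ h (y + t • u) - ∇ h y‖ ≤ ℓ * (t * ‖u‖) := by
    simpa [norm_smul, abs_of_nonneg ht] using hlip (y + t • u) y
  refine neg_le_of_abs_le ?_
  calc |⟪∇ h (y + t • u) - ∇ h y, u⟫|
      ≤ ‖∇ h (y + t • u) - ∇ h y‖ * ‖u‖ := abs_real_inner_le_norm _ _
    _ ≤ ℓ * (t * ‖u‖) * ‖u‖ := by gcongr
    _ = ℓ * t * ‖u‖ ^ 2 := by ring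

lemma add_inner_gradient_sub_norm_sq_le (hdiff : Differentiable ℝ h)
    (hlip : ∀ z₁ z₂, ‖∇ h z₁ - ∇ h z₂‖ ≤ ℓ * ‖z₁ - z₂‖) (y u : E) :
    h y + ⟪∇ h y, u⟫ - ℓ / 2 * ‖u‖ ^ 2 ≤ h (y + u) := by
  let φ : ℝ → ℝ := fun t => h (y + t • u) - t * ⟪∇ h y, u⟫ + ℓ / 2 * ‖u‖ ^ 2 * t ^ 2
  have hφ (t : ℝ) :
      HasDerivAt φ (⟪∇ h (y + t • u) - ∇ h y, u⟫ + ℓ * t * ‖u‖ ^ 2) t := by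
    convert! ((hasDerivAt_comp_add_smul (hdiff (y + t • u)).hasGradientAt).sub
      ((hasDerivAt_id t).mul_const ⟪∇ h y, u⟫)).add
      ((hasDerivAt_pow 2 t).const_mul (ℓ / 2 * ‖u‖ ^ 2)) using 1
    rw [inner_sub_left]
    ring
  have hmono : MonotoneOn φ (Set.Ici 0) := by
    refine monotoneOn_of_hasDerivWithinAt_nonneg (convex_Ici 0)
      (fun t _ => (hφ t).continuousAt.continuousWithinAt)
      (fun t _ => (hφ t).hasDerivWithinAt) fun t ht => ?_
    linarith [neg_mul_norm_sq_le_inner_gradient_sub hlip y u (interior_subset ht : 0 ≤ t)]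
  have hφ01 : φ 0 ≤ φ 1 := hmono Set.self_mem_Ici (Set.mem_Ici.2 zero_le_one) zero_le_one
  simp only [φ, zero_smul, one_smul, add_zero] at hφ01
  linarith

lemma norm_gradient_sq_le_of_forall_le (hℓ : 0 < ℓ) (hdiff : Differentiable ℝ h)
    (hlip : ∀ z₁ z₂, ‖∇ h z₁ - ∇ h z₂‖ ≤ ℓ * ‖z₁ - z₂‖) {M : ℝ} (hM : ∀ z, h z ≤ M) (y : E) :
    ‖∇ h y‖ ^ 2 ≤ 2 * ℓ * (M - h y) := by
  have hstep := (add_inner_gradient_sub_norm_sq_le hdiff hlip y ((1 / ℓ) • ∇ h y)).trans (hM _)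
  have hgain : ⟪∇ h y, (1 / ℓ) • ∇ h y⟫ - ℓ / 2 * ‖(1 / ℓ) • ∇ h y‖ ^ 2
      = ‖∇ h y‖ ^ 2 / (2 * ℓ) := by
    rw [real_inner_smul_right, real_inner_self_eq_norm_sq, norm_smul, mul_pow, Real.norm_eq_abs,
      sq_abs]
    field_simp
    ring
  have hdiv : ‖∇ h y‖ ^ 2 / (2 * ℓ) ≤ M - h y := by linarith
  rwa [div_le_iff₀' (by positivity)] at hdiv

lemma le_add_inner_sub_of_strongConcaveOn {s : Set E} {τ : ℝ} (hconc : StrongConcaveOn s τ h)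
    {y z g : E} (hy : y ∈ s) (hz : z ∈ s) (hg : HasGradientAt h g y) :
    h z + τ / 2 * ‖y - z‖ ^ 2 ≤ h y + ⟪g, z - y⟫ := by
  have hslope : Tendsto (fun t : ℝ => t⁻¹ • (h (y + t • (z - y)) - h y)) (𝓝[>] 0)
      (𝓝 ⟪g, z - y⟫) := by
    simpa using (hg.hasFDerivAt.hasLineDerivAt (z - y)).tendsto_slope_zero_right
  have hlower : Tendsto (fun t : ℝ => h z - h y + (1 - t) * (τ / 2 * ‖y - z‖ ^ 2)) (𝓝[>] 0)
      (𝓝 (h z - h y + τ / 2 * ‖y - z‖ ^ 2)) := by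
    refine Tendsto.mono_left (Continuous.tendsto' (by fun_prop) 0 _ ?_) nhdsWithin_le_nhds
    ring
  have hle : h z - h y + τ / 2 * ‖y - z‖ ^ 2 ≤ ⟪g, z - y⟫ := by
    refine le_of_tendsto_of_tendsto hlower hslope ?_
    filter_upwards [Ioo_mem_nhdsGT one_pos] with t ⟨ht0, ht1⟩
    have hcomb := hconc.2 hy hz (sub_nonneg.2 ht1.le) ht0.le (sub_add_cancel 1 t)
    rw [show (1 - t) • y + t • z = y + t • (z - y) by module] at hcomb
    simp only [smul_eq_mul] at hcomb ⊢
    rw [le_inv_mul_iff₀ ht0]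
    linarith
  linarith

lemma norm_add_smul_gradient_sub_sq_le {τ η : ℝ} {ystar : E} (hℓ : 0 < ℓ)
    (hdiff : Differentiable ℝ h) (hlip : ∀ z₁ z₂, ‖∇ h z₁ - ∇ h z₂‖ ≤ ℓ * ‖z₁ - z₂‖)
    (hconc : StrongConcaveOn Set.univ τ h) (hmax : ∀ z, h z ≤ h ystar)
    (hη : 0 ≤ η) (hηℓ : η ≤ 1 / ℓ) (y : E) :
    ‖y + η • ∇ h y - ystar‖ ^ 2 ≤ (1 - η * τ) * ‖y - ystar‖ ^ 2 := by
  have hgrad := norm_gradient_sq_le_of_forall_le hℓ hdiff hlip hmax y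
  have hinner := le_add_inner_sub_of_strongConcaveOn hconc (Set.mem_univ y)
    (Set.mem_univ ystar) (hdiff y).hasGradientAt
  have hgap : 0 ≤ 2 * η * (1 - η * ℓ) * (h ystar - h y) :=
    mul_nonneg (mul_nonneg (by positivity) (sub_nonneg.2 ((le_div_iff₀ hℓ).1 hηℓ)))
      (sub_nonneg.2 (hmax y))
  calc ‖y + η • ∇ h y - ystar‖ ^ 2
      = ‖y - ystar‖ ^ 2 - 2 * η * ⟪∇ h y, ystar - y⟫ + η ^ 2 * ‖∇ h y‖ ^ 2 := by
        rw [add_sub_right_comm, norm_add_sq_real, real_inner_smul_right, real_inner_comm,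
          ← neg_sub ystar y, inner_neg_right, norm_smul, mul_pow, Real.norm_eq_abs, sq_abs]
        ring
    _ ≤ ‖y - ystar‖ ^ 2 - 2 * η * (h ystar - h y + τ / 2 * ‖y - ystar‖ ^ 2)
          + η ^ 2 * (2 * ℓ * (h ystar - h y)) := by
        gcongr
        linarith
    _ ≤ (1 - η * τ) * ‖y - ystar‖ ^ 2 := by linarith

end SmoothAscent

lemma half_step_bound_le {ℓ τ r : ℝ} (hℓ : 0 < ℓ) (hτ : 0 ≤ τ) (hr : 0 ≤ r) (V B : ℝ) :
    (1 - 1 / (2 * ℓ) * τ) * r + (1 / (2 * ℓ)) ^ 2 * (V / B)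
      ≤ (1 - τ / (4 * ℓ)) * r + V / (4 * ℓ ^ 2 * B) := by
  have hrate : τ / (4 * ℓ) ≤ 1 / (2 * ℓ) * τ := by
    rw [one_div_mul_eq_div]
    gcongr
    norm_num
  have hnoise : (1 / (2 * ℓ)) ^ 2 * (V / B) = V / (4 * ℓ ^ 2 * B) := by
    field_simp
    ring
  rw [hnoise]
  gcongr

section StochasticStep

variable {E : Type*} [NormedAddCommGroup E] [InnerProductSpace ℝ E] [CompleteSpace E]
  {Ω : Type*} [MeasurableSpace Ω] {μ : Measure Ω} [IsProbabilityMeasure μ]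

lemma integral_norm_const_add_sq_of_integral_eq_zero {X : Ω → E} (hX : Integrable X μ)
    (hXsq : Integrable (fun ω => ‖X ω‖ ^ 2) μ) (hmean : ∫ ω, X ω ∂μ = 0) (a : E) :
    ∫ ω, ‖a + X ω‖ ^ 2 ∂μ = ‖a‖ ^ 2 + ∫ ω, ‖X ω‖ ^ 2 ∂μ := by
  have hcross : Integrable (fun ω => 2 * ⟪a, X ω⟫) μ := (hX.const_inner a).const_mul 2
  have hlinear : Integrable (fun ω => ‖a‖ ^ 2 + 2 * ⟪a, X ω⟫) μ := (integrable_const _).add hcross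
  calc ∫ ω, ‖a + X ω‖ ^ 2 ∂μ
      = ∫ ω, (‖a‖ ^ 2 + 2 * ⟪a, X ω⟫ + ‖X ω‖ ^ 2) ∂μ := by simp only [norm_add_sq_real]
    _ = ‖a‖ ^ 2 + 2 * ⟪a, ∫ ω, X ω ∂μ⟫ + ∫ ω, ‖X ω‖ ^ 2 ∂μ := by
        rw [integral_add hlinear hXsq,
          integral_add (integrable_const _) hcross, integral_const_mul, integral_inner hX,
          integral_const, probReal_univ, one_smul]
    _ = ‖a‖ ^ 2 + ∫ ω, ‖X ω‖ ^ 2 ∂μ := by rw [hmean, inner_zero_right, mul_zero, add_zero]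

lemma integral_norm_add_smul_sub_sq {G : Ω → E} {g : E} (hGint : Integrable G μ)
    (hGmean : ∫ ω, G ω ∂μ = g) (hGvarint : Integrable (fun ω => ‖G ω - g‖ ^ 2) μ)
    (y z : E) (η : ℝ) :
    ∫ ω, ‖y + η • G ω - z‖ ^ 2 ∂μ
      = ‖y + η • g - z‖ ^ 2 + η ^ 2 * ∫ ω, ‖G ω - g‖ ^ 2 ∂μ := by
  have hnoise : Integrable (fun ω => η • (G ω - g)) μ :=
    (hGint.sub (integrable_const g)).smul η
  have hnoise_mean : ∫ ω, η • (G ω - g) ∂μ = 0 := by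
    rw [integral_smul, integral_sub hGint (integrable_const g), hGmean]
    simp
  have hnorm (ω : Ω) : ‖η • (G ω - g)‖ ^ 2 = η ^ 2 * ‖G ω - g‖ ^ 2 := by
    rw [norm_smul, mul_pow, Real.norm_eq_abs, sq_abs]
  have hsplit (ω : Ω) : y + η • G ω - z = y + η • g - z + η • (G ω - g) := by module
  simp only [hsplit]
  rw [integral_norm_const_add_sq_of_integral_eq_zero hnoise
    (by simpa only [hnorm] using hGvarint.const_mul (η ^ 2)) hnoise_mean]
  simp only [hnorm, integral_const_mul]

theorem stmt4_general {ℓ τ η V : ℝ} (hℓ : 0 < ℓ) (hη : 0 ≤ η) (hηℓ : η ≤ 1 / ℓ)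
    {h : E → ℝ} (hdiff : Differentiable ℝ h)
    (hlip : ∀ z₁ z₂, ‖∇ h z₁ - ∇ h z₂‖ ≤ ℓ * ‖z₁ - z₂‖)
    {ystar : E} (hconc : StrongConcaveOn Set.univ τ h) (hmax : ∀ z, h z ≤ h ystar)
    {G : Ω → E} {y : E} (hGint : Integrable G μ) (hGmean : ∫ ω, G ω ∂μ = ∇ h y)
    (hGvarint : Integrable (fun ω => ‖G ω - ∇ h y‖ ^ 2) μ)
    (hGvar : ∫ ω, ‖G ω - ∇ h y‖ ^ 2 ∂μ ≤ V) :
    ∫ ω, ‖y + η • G ω - ystar‖ ^ 2 ∂μ ≤ (1 - η * τ) * ‖y - ystar‖ ^ 2 + η ^ 2 * V := by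
  rw [integral_norm_add_smul_sub_sq hGint hGmean hGvarint]
  gcongr
  exact norm_add_smul_gradient_sub_sq_le hℓ hdiff hlip hconc hmax hη hηℓ y

end StochasticStep

/-- Let `f : ℝ^D × ℝ^{d'} → ℝ` be `ℓ`-Lipschitz smooth, with `y ↦ f (x, y)`
`τ`-strongly concave with unique maximizer `y*(x)` for a fixed `x`.  Let `G` be a random
vector with `E[G] = ∇_y f (x, y)` and `E[‖G − ∇_y f (x, y)‖²] ≤ σ²/B`.  Then the stochastic
gradient ascent step `y⁺ = y + (1/(2ℓ)) • G` satisfies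
`E[‖y⁺ − y*(x)‖²] ≤ (1 − τ/(4ℓ))·‖y − y*(x)‖² + σ²/(4ℓ²B)`. -/
theorem stmt4 (D d' : ℕ) (ℓ τ σ B : ℝ) (hℓ : 0 < ℓ) (hτ : 0 < τ) (hσ : 0 < σ) (hB : 1 ≤ B)
    (f : EuclideanProd D d' → ℝ) (hdiff : Differentiable ℝ f)
    (hlip : ∀ z₁ z₂, ‖gradient f z₁ - gradient f z₂‖ ≤ ℓ * ‖z₁ - z₂‖)
    (x : EuclideanSpace ℝ (Fin D)) (ystar : EuclideanSpace ℝ (Fin d'))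
    (hconc : StrongConcaveOn Set.univ τ (fun y => f (euclidPair x y)))
    (hmax : ∀ y, f (euclidPair x y) ≤ f (euclidPair x ystar))
    (huniq : ∀ y', (∀ y, f (euclidPair x y) ≤ f (euclidPair x y')) → y' = ystar)
    (Ω : Type*) [MeasurableSpace Ω] (μ : Measure Ω) [IsProbabilityMeasure μ]
    (G : Ω → EuclideanSpace ℝ (Fin d'))
    (y : EuclideanSpace ℝ (Fin d'))
    (hGint : Integrable G μ)
    (hGmean : (∫ ω, G ω ∂μ) = gradient (fun y' => f (euclidPair x y')) y)
    (hGvarint : Integrable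
      (fun ω => ‖G ω - gradient (fun y' => f (euclidPair x y')) y‖ ^ 2) μ)
    (hGvar : (∫ ω, ‖G ω - gradient (fun y' => f (euclidPair x y')) y‖ ^ 2 ∂μ) ≤ σ ^ 2 / B) :
    (∫ ω, ‖(y + (1 / (2 * ℓ)) • G ω) - ystar‖ ^ 2 ∂μ)
      ≤ (1 - τ / (4 * ℓ)) * ‖y - ystar‖ ^ 2 + σ ^ 2 / (4 * ℓ ^ 2 * B) :=
  (stmt4_general hℓ (by positivity) (one_div_le_one_div_of_le hℓ (by linarith))
    (hdiff.comp (euclidPairAffineIsometry d' x).toContinuousAffineMap.differentiable)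
    (norm_gradient_comp_affineIsometry_sub_le hdiff hlip (euclidPairAffineIsometry d' x))
    hconc hmax hGint hGmean hGvarint hGvar).trans (half_step_bound_le hℓ hτ.le (sq_nonneg _) _ _)
end
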